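/- For all positive integers i and b with 2 ≤ b ≤ 5i + 4, there exists a rational convex polygon P ⊂ ℝ² of denominator 10 that is pseudointegral, has exactly i lattice points in its interior, and has exactly b lattice points on its boundary. In fact, one may take P = conv{(i,0), (0,1/5), (−3/2,−1), (b−3,−1), (i + (4/5)(b−4), −4/5)}. -/

import Mathlib

open Set Pointwise

/-- The set of lattice points of the plane. -/
def latticePts : Set (ℝ × ℝ) := {p | ∃ m n : ℤ, p = ((m : ℝ), (n : ℝ))}

/-- The coercion of a rational point of the plane to a real point. -/
def qpt (v : ℚ × ℚ) : ℝ × ℝ := ((v.1 : ℝ), (v.2 : ℝ))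

/-- The Ehrhart function of a set `P ⊆ ℝ²`:  `t ↦ #(tP ∩ ℤ²)`. -/
noncomputable def ehr (P : Set (ℝ × ℝ)) (t : ℕ) : ℕ :=
  (((t : ℝ) • P) ∩ latticePts).ncard

/-- A set `P ⊆ ℝ²` is pseudointegral (a PIP) if its Ehrhart function agrees with
a polynomial at all positive integers. -/
def IsPIP (P : Set (ℝ × ℝ)) : Prop :=
  ∃ c : Polynomial ℚ, ∀ t : ℕ, 0 < t → (ehr P t : ℚ) = c.eval (t : ℚ)

/-- A rational triangle: the convex hull of three non-collinear rational points. -/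
def IsRatTriangle (T : Set (ℝ × ℝ)) : Prop :=
  ∃ p q r : ℚ × ℚ, ¬ Collinear ℝ ({qpt p, qpt q, qpt r} : Set (ℝ × ℝ)) ∧
    T = convexHull ℝ {qpt p, qpt q, qpt r}

/-- A rational convex polygon: the convex hull of a finite set of rational
points, with nonempty interior in ℝ². -/
def IsRatPolygon (P : Set (ℝ × ℝ)) : Prop :=
  ∃ V : Finset (ℚ × ℚ), P = convexHull ℝ (qpt '' (V : Set (ℚ × ℚ))) ∧
    (interior P).Nonempty

/-- `P` has denominator `d`: `d` is the least positive integer `k` such that the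
vertices (extreme points) of `kP` are all lattice points. -/
def HasDenom (P : Set (ℝ × ℝ)) (d : ℕ) : Prop :=
  IsLeast {k : ℕ | 0 < k ∧ Set.extremePoints ℝ ((k : ℝ) • P) ⊆ latticePts} d

/-! Cutting `tP` into horizontal rows, the left end of each row has slope `5/4` and its right end is
a concave piecewise linear function of the height, so the Ehrhart function is a sum of closed forms
over `-t ≤ n ≤ q`, where `q = ⌊t/5⌋`. Neither the apex `(0, 1/5)` nor the corner `(-3/2, -1)` is a
lattice point, and the two resulting quasi-periods cancel: the row sum of `⌊(t - n)/4⌋` leaves the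
remainder `⌊(t - q - 2)²/8⌋`, which equals the polynomial `q t - 3 q² - 2 q` because
`t - q - 2 = 4 q + (r - 2)` with `r = t mod 5` and `(r - 2)² < 8`. The result is
`(i + b/2 - 1) t² + (b/2) t + 1`. Its value `i + b` at `t = 1` reduces the boundary count to the
interior one, and all interior lattice points lie on the row `y = 0`. -/

section Polyhedron

variable {ι E : Type*} [AddCommGroup E] [Module ℝ E] [TopologicalSpace E]

/-- The polyhedron cut out by the inequalities `f j x ≤ c j`, for a family of continuous linear
functionals `f j` and bounds `c j`. -/
def polyhedron (f : ι → E →L[ℝ] ℝ) (c : ι → ℝ) : Set E := {x | ∀ j, f j x ≤ c j}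

variable (f : ι → E →L[ℝ] ℝ) (c : ι → ℝ)

lemma polyhedron_eq_iInter : polyhedron f c = ⋂ j, f j ⁻¹' Iic (c j) := by
  ext x
  simp only [polyhedron, mem_ofPred_eq, mem_iInter, mem_preimage, mem_Iic]

lemma convex_polyhedron : Convex ℝ (polyhedron f c) := by
  rw [polyhedron_eq_iInter]
  exact convex_iInter fun j => (convex_Iic (c j)).is_linear_preimage (f j).isLinear

lemma isClosed_polyhedron : IsClosed (polyhedron f c) := by
  rw [polyhedron_eq_iInter]
  exact isClosed_iInter fun j => isClosed_Iic.preimage (f j).continuous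

lemma smul_polyhedron {t : ℝ} (ht : 0 < t) : t • polyhedron f c = polyhedron f (t • c) := by
  ext x
  simp only [mem_smul_set_iff_inv_smul_mem₀ ht.ne', polyhedron, mem_ofPred_eq, map_smul,
    Pi.smul_apply, smul_eq_mul, inv_mul_le_iff₀ ht]

lemma interior_polyhedron [Finite ι] [ContinuousAdd E] [ContinuousSMul ℝ E]
    (hf : ∀ j, f j ≠ 0) : interior (polyhedron f c) = {x | ∀ j, f j x < c j} := by
  rw [polyhedron_eq_iInter, interior_iInter_of_finite]
  ext x
  simp only [← ((f _).isOpenMap_of_ne_zero (hf _)).preimage_interior_eq_interior_preimage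
    (f _).continuous, interior_Iic, mem_iInter, mem_preimage, mem_Iio, mem_ofPred_eq]

end Polyhedron

section Convexity

lemma extremePoints_smul {E : Type*} [AddCommGroup E] [Module ℝ E] {c : ℝ} (hc : c ≠ 0)
    (S : Set E) : extremePoints ℝ (c • S) = c • extremePoints ℝ S :=
  (image_extremePoints (LinearEquiv.smulOfNeZero ℝ E c hc) S).symm

lemma mk_mem_of_convexCombo {S : Set (ℝ × ℝ)} (hS : Convex ℝ S) {x₀ y₀ x₁ y₁ : ℝ}
    (h₀ : (x₀, y₀) ∈ S) (h₁ : (x₁, y₁) ∈ S) {s : ℝ} (hs₀ : 0 ≤ s) (hs₁ : s ≤ 1) {x y : ℝ}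
    (hx : x = s * x₀ + (1 - s) * x₁) (hy : y = s * y₀ + (1 - s) * y₁) : (x, y) ∈ S := by
  simpa [hx, hy] using hS h₀ h₁ hs₀ (sub_nonneg.2 hs₁) (add_sub_cancel s 1)

lemma mk_mem_of_le_of_le {S : Set (ℝ × ℝ)} (hS : Convex ℝ S) {x₀ x₁ x y : ℝ}
    (h₀ : (x₀, y) ∈ S) (h₁ : (x₁, y) ∈ S) (hx₀ : x₀ ≤ x) (hx₁ : x ≤ x₁) : (x, y) ∈ S := by
  obtain ⟨a, b, ha, hb, hab, rfl⟩ := (Icc_subset_segment (𝕜 := ℝ) ⟨hx₀, hx₁⟩ : x ∈ segment ℝ x₀ x₁)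
  have hy : a * y + b * y = y := by rw [← add_mul, hab, one_mul]
  simpa [hy] using hS h₀ h₁ ha hb hab

end Convexity

section IntegerSums

lemma sum_Icc_int_sub {M : Type*} [AddCommGroup M] (f : ℤ → M) {a b : ℤ} (hab : a ≤ b + 1) :
    ∑ n ∈ Finset.Icc a b, (f (n + 1) - f n) = f (b + 1) - f a := by
  obtain ⟨c, rfl⟩ : ∃ c, b = c - 1 := ⟨b + 1, by ring⟩
  rw [sub_add_cancel] at hab ⊢
  induction c, hab using Int.leInduction with
  | base => simp
  | succ c hac ih =>
    rw [add_sub_cancel_right, ← Finset.insert_Icc_sub_one_right_eq_Icc hac,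
      Finset.sum_insert (by simp), ih, sub_add_sub_cancel]

lemma two_mul_sum_Icc_id {a b : ℤ} (hab : a ≤ b + 1) :
    2 * ∑ n ∈ Finset.Icc a b, n = (b + 1 - a) * (a + b) := by
  have hstep (n : ℤ) : 2 * n = (n + 1) * (n + 1 - 1) - n * (n - 1) := by ring
  rw [Finset.mul_sum, Finset.sum_congr rfl fun n _ => hstep n,
    sum_Icc_int_sub (fun n => n * (n - 1)) hab]
  ring

lemma two_mul_sum_Icc_linear {a b : ℤ} (hab : a ≤ b + 1) (u v : ℤ) :
    2 * ∑ n ∈ Finset.Icc a b, (u * n + v) = (b + 1 - a) * (u * (a + b) + 2 * v) := by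
  rw [Finset.sum_add_distrib, ← Finset.mul_sum, Finset.sum_const, Int.card_Icc, nsmul_eq_mul,
    Int.toNat_of_nonneg (by linarith)]
  linear_combination u * two_mul_sum_Icc_id hab

lemma sum_max_zero_eq_sum {ι M : Type*} [AddCommMonoid M] [LinearOrder M] {s r : Finset ι}
    (hrs : r ⊆ s) {f : ι → M} (hr : ∀ n ∈ r, 0 ≤ f n) (hs : ∀ n ∈ s, n ∉ r → f n ≤ 0) :
    ∑ n ∈ s, max 0 (f n) = ∑ n ∈ r, f n := by
  rw [← Finset.sum_subset hrs fun n hn hnr => max_eq_left (hs n hn hnr)]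
  exact Finset.sum_congr rfl fun n hn => max_eq_right (hr n hn)

lemma sq_ediv_eight_sub (n : ℤ) : n ^ 2 / 8 - (n - 1) ^ 2 / 8 = (n + 1) / 4 := by
  obtain ⟨s, r, hr₀, hr₄, rfl⟩ : ∃ s r : ℤ, 0 ≤ r ∧ r < 4 ∧ n = 4 * s + r :=
    ⟨n / 4, n % 4, by omega, by omega, by omega⟩
  have hsq : (4 * s + r) ^ 2 = 8 * (2 * s ^ 2 + s * r) + r ^ 2 := by ring
  have hsq' : (4 * s + r - 1) ^ 2 = 8 * (2 * s ^ 2 + s * r - s) + (r - 1) ^ 2 := by ring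
  rw [hsq, hsq']
  interval_cases r <;> omega

lemma sum_Icc_ediv_four {a b : ℤ} (hab : a ≤ b + 1) (t : ℤ) :
    ∑ n ∈ Finset.Icc a b, (t - n) / 4 = (t - a - 1) ^ 2 / 8 - (t - b - 2) ^ 2 / 8 := by
  have hstep (n : ℤ) : (t - n) / 4 = -((t - (n + 1) - 1) ^ 2 / 8) - -((t - n - 1) ^ 2 / 8) := by
    have h := sq_ediv_eight_sub (t - n - 1)
    rw [sub_add_cancel] at h
    rw [← h, show t - (n + 1) - 1 = t - n - 1 - 1 by ring]
    ring
  rw [Finset.sum_congr rfl fun n _ => hstep n,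
    sum_Icc_int_sub (fun n => -((t - n - 1) ^ 2 / 8)) hab,
    show t - (b + 1) - 1 = t - b - 2 by ring]
  ring

end IntegerSums

section RowSum

/-- The abscissa of the right end of the row at height `n` of the dilated pentagon `tP`. The slope
changes at the vertices of height `0` and `-4t/5`. -/
def rowEnd (i b t n : ℤ) : ℤ :=
  i * t - (b - 4) * n - (5 * i - b + 4) * max 0 n - (i - 1) * max 0 (-5 * n - 4 * t)

lemma le_rowEnd_iff {i b t : ℤ} (hi : 1 ≤ i) (hb : b ≤ 5 * i + 4) (ht : 0 ≤ t) (m n : ℤ) :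
    m ≤ rowEnd i b t n ↔ m + 5 * i * n ≤ t * i ∧ m + (b - 4) * n ≤ t * i ∧
      m + (b + 1 - 5 * i) * n ≤ t * (5 * i - 4) := by
  unfold rowEnd
  rcases max_cases 0 n with ⟨h, hn⟩ | ⟨h, hn⟩ <;>
    rcases max_cases 0 (-5 * n - 4 * t) with ⟨h', hn'⟩ | ⟨h', hn'⟩ <;> rw [h, h']
  · exact ⟨fun hm => ⟨by nlinarith, by nlinarith, by nlinarith⟩, fun hm => by linarith [hm.2.1]⟩
  · exact ⟨fun hm => ⟨by nlinarith, by nlinarith, by nlinarith⟩, fun hm => by linarith [hm.2.2]⟩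
  · exact ⟨fun hm => ⟨by nlinarith, by nlinarith, by nlinarith⟩, fun hm => by linarith [hm.1]⟩
  · omega

lemma neg_ediv_four_le_rowEnd_add_one {i b t n : ℤ} (hi : 1 ≤ i) (hb₂ : 2 ≤ b)
    (hb : b ≤ 5 * i + 4) (hn₀ : -t ≤ n) (hn₁ : n ≤ t / 5) :
    -((t - 5 * n) / 4) ≤ rowEnd i b t n + 1 := by
  have ht : 0 ≤ t := by omega
  have hn : 5 * n ≤ t := by omega
  have hm : 4 * (-((t - 5 * n) / 4) - 1) ≤ 5 * n - t := by omega
  rw [← sub_le_iff_le_add, le_rowEnd_iff hi hb ht]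
  refine ⟨by nlinarith, ?_, by nlinarith⟩
  cases le_total 0 n <;> nlinarith

lemma two_mul_sum_max_zero_cut {t : ℤ} (ht : 0 < t) :
    2 * ∑ n ∈ Finset.Icc (-t) (t / 5), max 0 (-5 * n - 4 * t) =
      (t / 5 + 1) * (2 * t - 5 * (t / 5)) := by
  rw [sum_max_zero_eq_sum (r := Finset.Icc (-t) (t / 5 - t))
    (Finset.Icc_subset_Icc_right (by omega))
    (fun _ hn => by rw [Finset.mem_Icc] at hn; omega)
    (fun _ hn hn' => by rw [Finset.mem_Icc] at hn hn'; omega)]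
  simp only [sub_eq_add_neg _ (4 * t)]
  rw [two_mul_sum_Icc_linear (by omega)]
  ring

lemma two_mul_sum_max_zero_id {t : ℤ} (ht : 0 ≤ t) :
    2 * ∑ n ∈ Finset.Icc (-t) (t / 5), max 0 n = (t / 5 + 1) * (t / 5) := by
  rw [sum_max_zero_eq_sum (r := Finset.Icc 0 (t / 5)) (Finset.Icc_subset_Icc_left (by omega))
    (fun _ hn => (Finset.mem_Icc.1 hn).1)
    (fun _ hn hn' => by rw [Finset.mem_Icc] at hn hn'; omega),
    two_mul_sum_Icc_id (by omega)]
  ring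

lemma two_mul_sum_rowEnd (i b : ℤ) {t : ℤ} (ht : 0 < t) :
    2 * ∑ n ∈ Finset.Icc (-t) (t / 5), rowEnd i b t n =
      2 * i * t ^ 2 + (b - 4) * (t * (t + 1)) + (t / 5 + 1) * (2 * t - 5 * (t / 5)) := by
  have hlinear : 2 * ∑ n ∈ Finset.Icc (-t) (t / 5), (i * t - (b - 4) * n) =
      (t / 5 + 1 + t) * (2 * (i * t) - (b - 4) * (t / 5 - t)) := by
    have hcomm (n : ℤ) : i * t - (b - 4) * n = -(b - 4) * n + i * t := by ring
    simp only [hcomm]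
    rw [two_mul_sum_Icc_linear (by omega)]
    ring
  simp only [rowEnd, Finset.sum_sub_distrib (f := fun _ => _ - _ - _),
    Finset.sum_sub_distrib (f := fun _ => _ - _), ← Finset.mul_sum] at hlinear ⊢
  linear_combination hlinear - (5 * i - b + 4) * two_mul_sum_max_zero_id ht.le -
    (i - 1) * two_mul_sum_max_zero_cut ht

lemma sq_ediv_eight_at_apex (t : ℤ) :
    (t - t / 5 - 2) ^ 2 / 8 = t / 5 * t - 3 * (t / 5) ^ 2 - 2 * (t / 5) := by
  obtain ⟨q, r, hr₀, hr₅, rfl, hq⟩ : ∃ q r : ℤ, 0 ≤ r ∧ r < 5 ∧ t = 5 * q + r ∧ t / 5 = q :=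
    ⟨t / 5, t % 5, by omega, by omega, by omega, rfl⟩
  have hsq : (5 * q + r - q - 2) ^ 2 = (r - 2) ^ 2 + 8 * (2 * q ^ 2 + q * (r - 2)) := by ring
  have hrem : (r - 2) ^ 2 / 8 = 0 := by interval_cases r <;> rfl
  rw [hq, hsq, Int.add_mul_ediv_left _ _ (by norm_num), hrem]
  ring

lemma two_mul_sum_ediv_four {t : ℤ} (ht : 0 ≤ t) :
    2 * ∑ n ∈ Finset.Icc (-t) (t / 5), (t - 5 * n) / 4 =
      2 * t ^ 2 - (t / 5) * (t / 5 + 1) -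
        2 * (t / 5 * t - 3 * (t / 5) ^ 2 - 2 * (t / 5)) := by
  have hsplit (n : ℤ) : (t - 5 * n) / 4 = (t - n) / 4 - n := by omega
  have hleft : 2 * ((t - -t - 1) ^ 2 / 8) = t ^ 2 - t := by
    obtain ⟨k, hk⟩ := Int.even_mul_pred_self t
    rw [show (t - -t - 1) ^ 2 = 8 * k + 1 by linear_combination 4 * hk]
    have : (8 * k + 1) / 8 = k := by omega
    linear_combination 2 * this - hk
  simp only [hsplit]
  rw [Finset.sum_sub_distrib, sum_Icc_ediv_four (by omega), sq_ediv_eight_at_apex]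
  linear_combination hleft - two_mul_sum_Icc_id (show -t ≤ t / 5 + 1 by omega)

theorem two_mul_sum_row_card (i b : ℤ) {t : ℤ} (ht : 0 < t) :
    2 * ∑ n ∈ Finset.Icc (-t) (t / 5), (rowEnd i b t n + 1 + (t - 5 * n) / 4) =
      (2 * i + b - 2) * t ^ 2 + b * t + 2 := by
  have hcard : ∑ _n ∈ Finset.Icc (-t) (t / 5), (1 : ℤ) = t / 5 + 1 + t := by
    rw [Finset.sum_const, Int.card_Icc, nsmul_one, Int.natCast_toNat_eq_self.2 (by omega)]
    ring
  rw [Finset.sum_add_distrib, Finset.sum_add_distrib, hcard]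
  linear_combination two_mul_sum_rowEnd i b ht + two_mul_sum_ediv_four ht.le

end RowSum

section Pentagon

/-- The polygon of the theorem, for real parameters `i` and `b`. -/
def pentagon (i b : ℝ) : Set (ℝ × ℝ) :=
  convexHull ℝ {(i, 0), (0, 1/5), (-(3/2), -1), (b - 3, -1), (i + (4/5) * (b - 4), -(4/5))}

/-- The outer normals of the edges of the pentagon, as linear functionals, starting from the bottom
edge and going around clockwise. -/
def edgeForm (i b : ℝ) : Fin 5 → ℝ × ℝ →L[ℝ] ℝ :=
  let x := ContinuousLinearMap.fst ℝ ℝ ℝ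
  let y := ContinuousLinearMap.snd ℝ ℝ ℝ
  ![-y, (5 : ℝ) • y - (4 : ℝ) • x, x + (5 * i) • y, x + (b - 4) • y, x + (b + 1 - 5 * i) • y]

/-- The values of the edge forms on the edges of the pentagon. -/
def edgeBound (i : ℝ) : Fin 5 → ℝ := ![1, 1, i, i, 5 * i - 4]

lemma mk_mem_polyhedron_iff (i b t x y : ℝ) :
    (x, y) ∈ polyhedron (edgeForm i b) (t • edgeBound i) ↔
      -t ≤ y ∧ 5 * y ≤ t + 4 * x ∧ x + 5 * i * y ≤ t * i ∧ x + (b - 4) * y ≤ t * i ∧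
        x + (b + 1 - 5 * i) * y ≤ t * (5 * i - 4) := by
  simp [polyhedron, edgeForm, edgeBound, Fin.forall_fin_succ, neg_le]

lemma mk_mem_polyhedron_one_iff (i b x y : ℝ) :
    (x, y) ∈ polyhedron (edgeForm i b) (edgeBound i) ↔
      -1 ≤ y ∧ 5 * y ≤ 1 + 4 * x ∧ x + 5 * i * y ≤ i ∧ x + (b - 4) * y ≤ i ∧
        x + (b + 1 - 5 * i) * y ≤ 5 * i - 4 := by
  simpa only [one_smul, one_mul] using mk_mem_polyhedron_iff i b 1 x y

lemma edgeForm_ne_zero (i b : ℝ) (j : Fin 5) : edgeForm i b j ≠ 0 := by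
  intro h
  have h₁ := DFunLike.congr_fun h (1, 0)
  have h₂ := DFunLike.congr_fun h (0, 1)
  fin_cases j <;> simp [edgeForm] at h₁ h₂

variable {i b : ℝ}

lemma pentagon_subset_polyhedron (hi : 1 ≤ i) (hb₂ : 2 ≤ b) (hb : b ≤ 5 * i + 4) :
    pentagon i b ⊆ polyhedron (edgeForm i b) (edgeBound i) := by
  refine convexHull_min ?_ (convex_polyhedron _ _)
  simp only [insert_subset_iff, singleton_subset_iff, mk_mem_polyhedron_one_iff]
  refine ⟨?_, ?_, ?_, ?_, ?_⟩ <;> refine ⟨?_, ?_, ?_, ?_, ?_⟩ <;> linarith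

lemma polyhedron_subset_pentagon (hi : 1 ≤ i) :
    polyhedron (edgeForm i b) (edgeBound i) ⊆ pentagon i b := by
  rintro ⟨x, y⟩ hxy
  obtain ⟨hbot, hleft, hright₁, hright₂, hright₃⟩ := (mk_mem_polyhedron_one_iff i b x y).1 hxy
  have hconv : Convex ℝ (pentagon i b) := convex_convexHull ℝ _
  have hvert : {(i, 0), (0, 1/5), (-(3/2), -1), (b - 3, -1), (i + (4/5) * (b - 4), -(4/5))} ⊆
    pentagon i b := subset_convexHull ℝ _
  simp only [insert_subset_iff, singleton_subset_iff] at hvert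
  obtain ⟨hA, hB, hC, hD, hE⟩ := hvert
  have htop : y ≤ 1/5 := by nlinarith
  have hL : ((5 * y - 1) / 4, y) ∈ pentagon i b :=
    mk_mem_of_convexCombo hconv hB hC (s := (y + 1) * (5/6)) (by linarith) (by linarith)
      (by ring) (by ring)
  suffices ∃ x₁, (x₁, y) ∈ pentagon i b ∧ x ≤ x₁ by
    obtain ⟨x₁, hR, hx₁⟩ := this
    exact mk_mem_of_le_of_le hconv hL hR (by linarith) hx₁
  rcases le_total 0 y with hy₀ | hy₀
  · exact ⟨i - 5 * i * y, mk_mem_of_convexCombo hconv hB hA (s := 5 * y) (by linarith)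
      (by linarith) (by ring) (by ring), by linarith⟩
  rcases le_total (-(4/5)) y with hy₁ | hy₁
  · exact ⟨i - (b - 4) * y, mk_mem_of_convexCombo hconv hE hA (s := -(5/4) * y) (by linarith)
      (by linarith) (by ring) (by ring), by linarith⟩
  · exact ⟨5 * i - 4 - (b + 1 - 5 * i) * y, mk_mem_of_convexCombo hconv hE hD (s := 5 * (y + 1))
      (by linarith) (by linarith) (by ring) (by ring), by linarith⟩

theorem pentagon_eq_polyhedron (hi : 1 ≤ i) (hb₂ : 2 ≤ b) (hb : b ≤ 5 * i + 4) :
    pentagon i b = polyhedron (edgeForm i b) (edgeBound i) :=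
  (pentagon_subset_polyhedron hi hb₂ hb).antisymm (polyhedron_subset_pentagon hi)

lemma mk_mem_interior_pentagon_iff (hi : 1 ≤ i) (hb₂ : 2 ≤ b) (hb : b ≤ 5 * i + 4) (x y : ℝ) :
    (x, y) ∈ interior (pentagon i b) ↔
      -1 < y ∧ 5 * y < 1 + 4 * x ∧ x + 5 * i * y < i ∧ x + (b - 4) * y < i ∧
        x + (b + 1 - 5 * i) * y < 5 * i - 4 := by
  rw [pentagon_eq_polyhedron hi hb₂ hb, interior_polyhedron _ _ (edgeForm_ne_zero i b)]
  simp [edgeForm, edgeBound, Fin.forall_fin_succ, neg_lt, sub_lt_iff_lt_add]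

lemma apex_mem_extremePoints_pentagon (hi : 1 ≤ i) (hb₂ : 2 ≤ b) (hb : b ≤ 5 * i + 4) :
    (0, 1/5) ∈ extremePoints ℝ (pentagon i b) := by
  refine exposedPoints_subset_extremePoints
    ⟨subset_convexHull ℝ _ (by simp), ContinuousLinearMap.snd ℝ ℝ ℝ, ?_⟩
  rintro ⟨x, y⟩ hxy
  obtain ⟨-, hleft, hright, -, -⟩ := (mk_mem_polyhedron_one_iff i b x y).1
    (pentagon_subset_polyhedron hi hb₂ hb hxy)
  refine ⟨show y ≤ 1/5 by nlinarith, fun (hy : 1/5 ≤ y) => ?_⟩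
  obtain rfl : y = 1/5 := le_antisymm (by nlinarith) hy
  obtain rfl : x = 0 := by linarith
  rfl

lemma leftCorner_mem_extremePoints_pentagon (hi : 1 ≤ i) (hb₂ : 2 ≤ b) (hb : b ≤ 5 * i + 4) :
    (-(3/2), -1) ∈ extremePoints ℝ (pentagon i b) := by
  refine exposedPoints_subset_extremePoints
    ⟨subset_convexHull ℝ _ (by simp), -ContinuousLinearMap.fst ℝ ℝ ℝ, ?_⟩
  rintro ⟨x, y⟩ hxy
  obtain ⟨hbot, hleft, -⟩ := (mk_mem_polyhedron_one_iff i b x y).1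
    (pentagon_subset_polyhedron hi hb₂ hb hxy)
  refine ⟨show -x ≤ -(-(3/2)) by linarith, fun (hx : -(-(3/2)) ≤ -x) => ?_⟩
  obtain rfl : x = -(3/2) := by linarith
  obtain rfl : y = -1 := by linarith
  rfl

end Pentagon

section LatticePoints

lemma ncard_inter_latticePts {S : Set (ℝ × ℝ)} (rows : Finset ℤ) (row : ℤ → Finset ℤ)
    (hS : ∀ m n : ℤ, ((m : ℝ), (n : ℝ)) ∈ S ↔ n ∈ rows ∧ m ∈ row n) :
    (S ∩ latticePts).ncard = ∑ n ∈ rows, (row n).card := by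
  let point : (Σ _ : ℤ, ℤ) → ℝ × ℝ := fun s => (s.2, s.1)
  have hinj : Function.Injective point := by
    rintro ⟨n, m⟩ ⟨n', m'⟩ h
    simp only [point, Prod.mk.injEq, Int.cast_inj] at h
    rw [h.1, h.2]
  have himage : S ∩ latticePts = point '' (rows.sigma row : Set (Σ _ : ℤ, ℤ)) := by
    ext p
    constructor
    · rintro ⟨hp, m, n, rfl⟩
      exact ⟨⟨n, m⟩, Finset.mem_sigma.2 ((hS m n).1 hp), rfl⟩
    · rintro ⟨⟨n, m⟩, hnm, rfl⟩
      exact ⟨(hS m n).2 (Finset.mem_sigma.1 hnm), m, n, rfl⟩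
  rw [himage, ncard_image_of_injective _ hinj, ncard_coe_finset, Finset.card_sigma]

lemma intCast_mem_polyhedron_iff {i b t : ℤ} (hi : 1 ≤ i) (hb : b ≤ 5 * i + 4) (ht : 0 ≤ t)
    (m n : ℤ) :
    ((m : ℝ), (n : ℝ)) ∈ polyhedron (edgeForm i b) ((t : ℝ) • edgeBound i) ↔
      n ∈ Finset.Icc (-t) (t / 5) ∧
        m ∈ Finset.Icc (-((t - 5 * n) / 4)) (rowEnd i b t n) := by
  rw [mk_mem_polyhedron_iff, Finset.mem_Icc, Finset.mem_Icc, le_rowEnd_iff hi hb ht]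
  norm_cast
  have hleft : 5 * n ≤ t + 4 * m ↔ -((t - 5 * n) / 4) ≤ m := by omega
  rw [hleft]
  refine ⟨fun ⟨hbot, hm, hright⟩ => ⟨⟨hbot, ?_⟩, hm, hright⟩,
    fun ⟨⟨hbot, _⟩, hm, hright⟩ => ⟨hbot, hm, hright⟩⟩
  have hn : 5 * n ≤ t := by nlinarith [hleft.2 hm, hright.1]
  omega

theorem ncard_polyhedron_inter_latticePts {i b t : ℤ} (hi : 1 ≤ i) (hb₂ : 2 ≤ b)
    (hb : b ≤ 5 * i + 4) (ht : 0 < t) :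
    2 * ((polyhedron (edgeForm i b) ((t : ℝ) • edgeBound i) ∩ latticePts).ncard : ℤ) =
      (2 * i + b - 2) * t ^ 2 + b * t + 2 := by
  rw [ncard_inter_latticePts _ _ (intCast_mem_polyhedron_iff hi hb ht.le), Nat.cast_sum,
    ← two_mul_sum_row_card i b ht]
  congr 1
  refine Finset.sum_congr rfl fun n hn => ?_
  obtain ⟨hn₀, hn₁⟩ := Finset.mem_Icc.1 hn
  have hrow := neg_ediv_four_le_rowEnd_add_one hi hb₂ hb hn₀ hn₁
  rw [Int.card_Icc, Int.toNat_of_nonneg (sub_nonneg.2 hrow), sub_neg_eq_add]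

variable {i b : ℕ} (hi : 1 ≤ i) (hb₂ : 2 ≤ b) (hb : b ≤ 5 * i + 4)
include hi hb₂ hb

theorem ehr_pentagon {t : ℕ} (ht : 0 < t) :
    2 * (ehr (pentagon i b) t : ℤ) = (2 * i + b - 2) * t ^ 2 + b * t + 2 := by
  rw [ehr, pentagon_eq_polyhedron (by exact_mod_cast hi) (by exact_mod_cast hb₂)
    (by exact_mod_cast hb), smul_polyhedron _ _ (by exact_mod_cast ht)]
  exact_mod_cast ncard_polyhedron_inter_latticePts (i := i) (b := b) (t := t)
    (by exact_mod_cast hi) (by exact_mod_cast hb₂) (by exact_mod_cast hb) (by exact_mod_cast ht)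

theorem isPIP_pentagon : IsPIP (pentagon i b) := by
  refine ⟨.C ((2 * i + b - 2) / 2 : ℚ) * .X ^ 2 + .C (b / 2 : ℚ) * .X + 1, fun t ht => ?_⟩
  have hehr : 2 * (ehr (pentagon i b) t : ℚ) = (2 * i + b - 2) * t ^ 2 + b * t + 2 := by
    exact_mod_cast ehr_pentagon hi hb₂ hb ht
  simp only [Polynomial.eval_add, Polynomial.eval_mul, Polynomial.eval_pow, Polynomial.eval_X,
    Polynomial.eval_C, Polynomial.eval_one]
  linear_combination hehr / 2

theorem ncard_interior_pentagon : (interior (pentagon i b) ∩ latticePts).ncard = i := by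
  have hmem (m n : ℤ) : ((m : ℝ), (n : ℝ)) ∈ interior (pentagon i b) ↔
      n ∈ ({0} : Finset ℤ) ∧ m ∈ Finset.Ico 0 (i : ℤ) := by
    rw [mk_mem_interior_pentagon_iff (by exact_mod_cast hi) (by exact_mod_cast hb₂)
      (by exact_mod_cast hb), Finset.mem_singleton, Finset.mem_Ico]
    constructor
    · rintro ⟨hbot, hleft, hright, -⟩
      have hn₀ : -1 < n := by exact_mod_cast hbot
      have hn₁ : 5 * n < 1 + 4 * m := by exact_mod_cast hleft
      have hmi : m + 5 * i * n < i := by exact_mod_cast hright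
      obtain rfl : n = 0 := by nlinarith
      omega
    · rintro ⟨rfl, hm₀, hmi⟩
      have hm₀' : (0 : ℝ) ≤ m := by exact_mod_cast hm₀
      have hmi' : (m : ℝ) < i := by exact_mod_cast hmi
      have hi' : (1 : ℝ) ≤ i := by exact_mod_cast hi
      simp only [Int.cast_zero]
      refine ⟨?_, ?_, ?_, ?_, ?_⟩ <;> linarith
  rw [ncard_inter_latticePts {0} _ hmem, Finset.sum_singleton, Int.card_Ico, sub_zero,
    Int.toNat_natCast]

theorem ncard_frontier_pentagon : (frontier (pentagon i b) ∩ latticePts).ncard = b := by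
  have hclosed : IsClosed (pentagon (i : ℝ) b) := by
    rw [pentagon_eq_polyhedron (by exact_mod_cast hi) (by exact_mod_cast hb₂)
      (by exact_mod_cast hb)]
    exact isClosed_polyhedron _ _
  have hint := ncard_interior_pentagon hi hb₂ hb
  have hfin : (interior (pentagon (i : ℝ) b) ∩ latticePts).Finite :=
    finite_of_ncard_pos (by omega)
  have htotal : 2 * ((pentagon (i : ℝ) b ∩ latticePts).ncard : ℤ) = 2 * (i + b) := by
    have h := ehr_pentagon hi hb₂ hb one_pos
    rw [ehr, Nat.cast_one, one_smul] at h
    linear_combination h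
  rw [hclosed.frontier_eq, inter_comm, inter_sdiff_distrib_left, inter_comm, inter_comm latticePts,
    ncard_sdiff (inter_subset_inter_left _ interior_subset) hfin, hint]
  omega

theorem isRatPolygon_pentagon : IsRatPolygon (pentagon i b) := by
  refine ⟨{((i : ℚ), 0), (0, 1/5), (-(3/2), -1), ((b : ℚ) - 3, -1),
    ((i : ℚ) + (4/5) * ((b : ℚ) - 4), -(4/5))}, ?_, ?_⟩
  · simp [pentagon, qpt, image_insert_eq]
  · have hne : (interior (pentagon (i : ℝ) b) ∩ latticePts).Nonempty :=
      nonempty_of_ncard_ne_zero (by rw [ncard_interior_pentagon hi hb₂ hb]; omega)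
    exact hne.mono inter_subset_left

omit hi hb₂ hb in
lemma extremePoints_ten_smul_pentagon_subset :
    extremePoints ℝ ((10 : ℝ) • pentagon i b) ⊆ latticePts := by
  rw [pentagon, ← convexHull_smul]
  refine extremePoints_convexHull_subset.trans ?_
  simp only [smul_set_insert, smul_set_singleton, insert_subset_iff, singleton_subset_iff,
    Prod.smul_mk, smul_eq_mul]
  refine ⟨⟨10 * i, 0, ?_⟩, ⟨0, 2, ?_⟩, ⟨-15, -10, ?_⟩, ⟨10 * (b - 3), -10, ?_⟩,
    ⟨10 * i + 8 * (b - 4), -8, ?_⟩⟩ <;> ext <;> push_cast <;> ring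

theorem hasDenom_pentagon : HasDenom (pentagon i b) 10 := by
  refine ⟨⟨by norm_num, by exact_mod_cast extremePoints_ten_smul_pentagon_subset⟩, ?_⟩
  rintro k ⟨hk, hsub⟩
  rw [extremePoints_smul (by exact_mod_cast hk.ne')] at hsub
  obtain ⟨_, n, hn⟩ := hsub (smul_mem_smul_set (apex_mem_extremePoints_pentagon
    (by exact_mod_cast hi) (by exact_mod_cast hb₂) (by exact_mod_cast hb)))
  obtain ⟨m, _, hm⟩ := hsub (smul_mem_smul_set (leftCorner_mem_extremePoints_pentagon
    (by exact_mod_cast hi) (by exact_mod_cast hb₂) (by exact_mod_cast hb)))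
  simp only [Prod.smul_mk, smul_eq_mul, Prod.mk.injEq] at hn hm
  have hfive : (k : ℤ) = 5 * n := by
    have : (k : ℝ) = 5 * n := by linear_combination 5 * hn.2
    exact_mod_cast this
  have htwo : -3 * (k : ℤ) = 2 * m := by
    have : -3 * (k : ℝ) = 2 * m := by linear_combination 2 * hm.1
    exact_mod_cast this
  omega

end LatticePoints

/-- for all positive integers i, b with 2 ≤ b ≤ 5i + 4, the polygon
P = conv{(i,0), (0,1/5), (−3/2,−1), (b−3,−1), (i + (4/5)(b−4), −4/5)} is a
rational convex polygon of denominator 10 that is pseudointegral, with exactly i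
interior and b boundary lattice points. -/
theorem stmt_12 (i b : ℕ) (hi : 0 < i) (hb2 : 2 ≤ b) (hb : b ≤ 5 * i + 4)
    (P : Set (ℝ × ℝ))
    (hP : P = convexHull ℝ
      ({((i : ℝ), 0), (0, 1/5), (-(3/2), -1), ((b : ℝ) - 3, -1),
        ((i : ℝ) + (4/5) * ((b : ℝ) - 4), -(4/5))} : Set (ℝ × ℝ))) :
    IsRatPolygon P ∧ HasDenom P 10 ∧ IsPIP P ∧
      (interior P ∩ latticePts).ncard = i ∧
      (frontier P ∩ latticePts).ncard = b := by
  obtain rfl : P = pentagon i b := hP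
  exact ⟨isRatPolygon_pentagon hi hb2 hb, hasDenom_pentagon hi hb2 hb, isPIP_pentagon hi hb2 hb,
    ncard_interior_pentagon hi hb2 hb, ncard_frontier_pentagon hi hb2 hb⟩
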